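/- arXiv:2508.13339 — 2 statements merged into one kernel-verified Lean document; each statement's English description precedes it below -/
import Mathlib

section
/- Let P be an n×n real symmetric positive definite matrix, H a ν×n real matrix, R a ν×ν real symmetric positive definite matrix, K = P·Hᵀ·(H·P·Hᵀ + R)⁻¹ the Kalman gain, P₊ = (I − K·H)·P the posterior covariance (positive definite, hence invertible), and Φ any n×n real matrix. Then the infinite-time smoother gain L∞ = P₊·Φᵀ·P₊⁻¹·(I − K·H) and the matrix A* = Φᵀ·(I − Hᵀ·Kᵀ) are similar via P₊, i.e., L∞ = P₊·A*·P₊⁻¹. In particular L∞ and A* have the same characteristic polynomial and the same eigenvalues (the paper's Lemma 2). -/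
open Matrix

/-- With prior covariance `P` (symmetric positive definite), measurement
sensitivity `H`, noise covariance `R` (symmetric positive definite), Kalman gain
`K = P * Hᵀ * (H * P * Hᵀ + R)⁻¹`, posterior covariance `P₊ = (I - K * H) * P`, and any
state-transition matrix `Φ`, the infinite-time smoother gain
`L∞ = P₊ * Φᵀ * P₊⁻¹ * (I - K * H)` and the matrix `A* = Φᵀ * (I - Hᵀ * Kᵀ)` are similar via
`P₊`, i.e. `L∞ = P₊ * A* * P₊⁻¹`; in particular they have the same characteristic polynomial
and the same (complex) eigenvalues (the paper's Lemma 2). -/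
theorem stmt4 {n ν : ℕ} (P : Matrix (Fin n) (Fin n) ℝ) (H : Matrix (Fin ν) (Fin n) ℝ)
    (R : Matrix (Fin ν) (Fin ν) ℝ) (Φ : Matrix (Fin n) (Fin n) ℝ)
    (K : Matrix (Fin n) (Fin ν) ℝ) (Pp Linf Astar : Matrix (Fin n) (Fin n) ℝ)
    (hP : P.PosDef) (hR : R.PosDef)
    (hK : K = P * Hᵀ * (H * P * Hᵀ + R)⁻¹)
    (hPp : Pp = (1 - K * H) * P)
    (hL : Linf = Pp * Φᵀ * Pp⁻¹ * (1 - K * H))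
    (hA : Astar = Φᵀ * (1 - Hᵀ * Kᵀ)) :
    Linf = Pp * Astar * Pp⁻¹ ∧
    Linf.charpoly = Astar.charpoly ∧
    spectrum ℂ (Linf.map (Complex.ofReal)) = spectrum ℂ (Astar.map (Complex.ofReal)) := by
  have hPt : Pᵀ = P := by simpa using hP.isHermitian.eq
  have hRt : Rᵀ = R := by simpa using hR.isHermitian.eq
  have hS : (H * P * Hᵀ + R).PosDef := by
    have h := hP.posSemidef.mul_mul_conjTranspose_same H
    rw [Matrix.conjTranspose_eq_transpose_of_trivial] at h
    exact Matrix.PosDef.posSemidef_add h hR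
  have hSt : (H * P * Hᵀ + R)ᵀ = H * P * Hᵀ + R := by simpa using hS.isHermitian.eq
  generalize hSd : H * P * Hᵀ + R = S at *
  have hSu : IsUnit S.det := (Matrix.isUnit_iff_isUnit_det _).1 hS.isUnit
  have hRu : IsUnit R.det := (Matrix.isUnit_iff_isUnit_det _).1 hR.isUnit
  have hPu : IsUnit P.det := (Matrix.isUnit_iff_isUnit_det _).1 hP.isUnit
  have hKS : K * S = P * Hᵀ := by
    rw [hK, Matrix.mul_assoc, Matrix.nonsing_inv_mul _ hSu, Matrix.mul_one]
  have hinv : (1 - K * H) * (1 + P * Hᵀ * R⁻¹ * H) = 1 := by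
    have h1 : K * H * (P * Hᵀ * R⁻¹ * H) = P * Hᵀ * R⁻¹ * H - K * H := by
      have h2 : H * P * Hᵀ = S - R := by rw [← hSd]; simp
      calc K * H * (P * Hᵀ * R⁻¹ * H) = K * (H * P * Hᵀ) * R⁻¹ * H := by
            simp only [Matrix.mul_assoc]
        _ = _ := by
            rw [h2, Matrix.mul_sub, hKS, Matrix.sub_mul, Matrix.sub_mul, Matrix.mul_assoc K,
              Matrix.mul_nonsing_inv _ hRu, Matrix.mul_one]
    rw [Matrix.sub_mul, Matrix.one_mul, Matrix.mul_add, h1, Matrix.mul_one]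
    abel
  have hMu : IsUnit (1 - K * H).det := by
    have := congrArg Matrix.det hinv
    rw [Matrix.det_mul, Matrix.det_one] at this
    exact IsUnit.of_mul_eq_one _ this
  have hPpu : IsUnit Pp.det := by
    rw [hPp, Matrix.det_mul]; exact hMu.mul hPu
  have hMt : (1 - K * H)ᵀ = 1 - Hᵀ * Kᵀ := by simp [Matrix.transpose_mul]
  have hPM : P * (1 - Hᵀ * Kᵀ) = (1 - K * H) * P := by
    rw [hK]
    simp only [Matrix.transpose_mul, Matrix.transpose_nonsing_inv, hSt, hPt,
      Matrix.transpose_transpose, Matrix.mul_sub, Matrix.sub_mul, Matrix.mul_one,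
      Matrix.one_mul, Matrix.mul_assoc]
  have hcomm : (1 - K * H) * Pp = Pp * (1 - Hᵀ * Kᵀ) := by
    rw [hPp, Matrix.mul_assoc (1 - K * H) P, hPM]
  have hc2 : Pp⁻¹ * (1 - K * H) = (1 - Hᵀ * Kᵀ) * Pp⁻¹ := by
    calc Pp⁻¹ * (1 - K * H) = Pp⁻¹ * ((1 - K * H) * Pp) * Pp⁻¹ := by
          rw [Matrix.mul_assoc, Matrix.mul_assoc, Matrix.mul_nonsing_inv _ hPpu, Matrix.mul_one]
      _ = _ := by
          rw [hcomm, ← Matrix.mul_assoc, Matrix.nonsing_inv_mul _ hPpu, Matrix.one_mul]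
  have hsim : Linf = Pp * Astar * Pp⁻¹ := by
    rw [hL, hA, Matrix.mul_assoc, hc2]
    simp only [Matrix.mul_assoc]
  have hchar : Linf.charpoly = Astar.charpoly := by
    rw [hsim, Matrix.charpoly_mul_comm, ← Matrix.mul_assoc, Matrix.nonsing_inv_mul _ hPpu,
      Matrix.one_mul]
  refine ⟨hsim, hchar, ?_⟩
  ext z
  have e1 : (Linf.map Complex.ofReal).charpoly = (Astar.map Complex.ofReal).charpoly := by
    have a := Matrix.charpoly_map Linf Complex.ofRealHom
    have b := Matrix.charpoly_map Astar Complex.ofRealHom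
    rw [hchar, ← b] at a
    exact a
  rw [Matrix.mem_spectrum_iff_isRoot_charpoly, Matrix.mem_spectrum_iff_isRoot_charpoly, e1]
end

section
/- Consider the Kalman filter recursion on ℝ^η: let P₀ be a symmetric positive semidefinite η×η real matrix, and for each k ≥ 0 let H_k be an η×η real matrix, R_k a symmetric positive definite η×η real matrix, Φ_k an η×η real matrix, and Q̌ a symmetric positive semidefinite η×η matrix; define K_k = P_k·H_kᵀ·(H_k·P_k·H_kᵀ + R_k)⁻¹, P₊_k = (I − K_k·H_k)·P_k, and P_{k+1} = Φ_k·P₊_k·Φ_kᵀ + Q̌, and assume each P_{k+1} is invertible. Let L_k = P₊_k·Φ_kᵀ·P_{k+1}⁻¹ be the RTS smoother gains and set Φ₋₁ = I. Then for every k ≥ 0, the ordered product satisfies L₀·L₁·⋯·L_k = P₀·[Φ₋₁ᵀ·(I − K₀·H₀)ᵀ · Φ₀ᵀ·(I − K₁·H₁)ᵀ · ⋯ · Φ_{k−1}ᵀ·(I − K_k·H_k)ᵀ]·Φ_kᵀ·P_{k+1}⁻¹, with all products ordered with increasing index from left to right. (This is the inverse-reduced smoother-gain-accumulator identity underlying the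 efficient observed-control algorithm.) -/
open Matrix

/-- For the Kalman filter recursion with prior covariances `P k`, gains
`K k = P k * (H k)ᵀ * (H k * P k * (H k)ᵀ + R k)⁻¹`, posteriors `Pp k = (I - K k * H k) * P k`,
propagation `P (k+1) = Φ k * Pp k * (Φ k)ᵀ + Q̌` (with `P 0` symmetric PSD, `R k` symmetric PD,
`Q̌` symmetric PSD, and each `P (k+1)` invertible), and RTS smoother gains
`L k = Pp k * (Φ k)ᵀ * (P (k+1))⁻¹`, the ordered product satisfies, for every `k`,
`L 0 * ⋯ * L k = P 0 * (∏ i = 0..k, (Φ (i-1))ᵀ * (I - K i * H i)ᵀ) * (Φ k)ᵀ * (P (k+1))⁻¹`,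
where `Φ (-1) = I` and all products are ordered with increasing index from left to right. -/
theorem stmt8 {η : ℕ} (P K Pp L H R Φ : ℕ → Matrix (Fin η) (Fin η) ℝ)
    (Q : Matrix (Fin η) (Fin η) ℝ)
    (hP0 : (P 0).PosSemidef) (hR : ∀ k, (R k).PosDef) (hQ : Q.PosSemidef)
    (hK : ∀ k, K k = P k * (H k)ᵀ * (H k * P k * (H k)ᵀ + R k)⁻¹)
    (hPp : ∀ k, Pp k = (1 - K k * H k) * P k)
    (hP : ∀ k, P (k + 1) = Φ k * Pp k * (Φ k)ᵀ + Q)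
    (hinv : ∀ k, IsUnit (P (k + 1)).det)
    (hL : ∀ k, L k = Pp k * (Φ k)ᵀ * (P (k + 1))⁻¹) :
    ∀ k, ((List.range (k + 1)).map L).prod =
      P 0 *
        ((List.range (k + 1)).map (fun i =>
          (if i = 0 then (1 : Matrix (Fin η) (Fin η) ℝ) else Φ (i - 1))ᵀ *
            (1 - K i * H i)ᵀ)).prod *
        (Φ k)ᵀ * (P (k + 1))⁻¹ := by
  have hRs : ∀ k, (R k)ᵀ = R k := fun k => by
    have h := (hR k).isHermitian.eq
    rwa [conjTranspose_eq_transpose_of_trivial] at h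
  have hQs : Qᵀ = Q := by
    have h := hQ.isHermitian.eq
    rwa [conjTranspose_eq_transpose_of_trivial] at h
  have hcomm : ∀ k, (P k)ᵀ = P k → Pp k = P k * (1 - K k * H k)ᵀ := by
    intro k hk
    rw [hPp, hK]
    simp only [transpose_sub, transpose_mul, transpose_one, transpose_nonsing_inv, transpose_add,
      transpose_transpose, hk, hRs, Matrix.mul_sub, Matrix.sub_mul, Matrix.mul_one,
      Matrix.one_mul, Matrix.mul_assoc]
  have hsym : ∀ k, (P k)ᵀ = P k := by
    intro k
    induction k with
    | zero =>
      have h := hP0.isHermitian.eq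
      rwa [conjTranspose_eq_transpose_of_trivial] at h
    | succ k ih =>
      have h : (Pp k)ᵀ = Pp k := by
        conv_rhs => rw [hcomm k ih]
        rw [hPp, transpose_mul, ih]
      rw [hP, transpose_add, hQs, transpose_mul, transpose_mul, h, transpose_transpose,
        Matrix.mul_assoc]
  intro k
  induction k with
  | zero =>
    simp [hL, hcomm 0 (hsym 0)]
  | succ k ih =>
    rw [List.range_succ, List.map_append, List.prod_append, ih, List.map_append, List.prod_append]
    simp only [List.map_cons, List.map_nil, List.prod_cons, List.prod_nil, mul_one,
      Nat.add_sub_cancel, if_neg (Nat.succ_ne_zero k)]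
    rw [hL (k + 1), hcomm _ (hsym (k + 1))]
    simp only [Matrix.mul_assoc]
    rw [Matrix.nonsing_inv_mul_cancel_left _ _ (hinv k)]
end
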